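/- Let λ > 0 and define, for w, w' > 0 and θ, θ' ∈ [−π, π), φ₄ = Γ(1/2)^{−1} ∫_0^∞ t^{−1/2} e^{−λt} · (√(ww')/(4πt)) ∫_0^{2π} e^{−(w² + w'² − 2ww' cos ϑ)/(4t)} dϑ · (4πt)^{−1/2} Σ_{n∈ℤ} e^{−(θ−θ'−2nπ)²/(4t)} dt. Then there exist constants C > 0 and δ₅ > 0 such that: (i) φ₄ ≤ (1/2π) ((w−w')² + (θ−θ')²)^{−1/2} + C whenever |w−w'| ≤ 1, |θ−θ'| ≤ π, w, w' > 0 (and (w,θ) ≠ (w',θ')); (ii) φ₄ ≤ C e^{−δ₅|w−w'|} whenever |w−w'| ≥ 1, |θ−θ'| ≤ π, w, w' > 0. -/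

import Mathlib

/-!
The operator `-∂_w² - 1/(4w²) - Δ_{𝕊¹}`, conjugated by `√w`, is the Laplacian of `ℝ² × 𝕊¹` on
functions which are radial in `ℝ²`. Unfolding the circle by images, `φ₄` is a sum over `n ∈ ℤ` of
angular averages of the kernel of `(-Δ + lam)^{-1/2}` on `ℝ³`, the `n`-th image being at
angular distance `s = θ - θ' - 2nπ`.

If `e^{-lam t}` is dropped, the time integral of one image is
`∫₀^∞ t⁻² e^{-R²/(4t)} dt = 4 / R²`, with `R² = w² + w'² + s² - 2ww' cos ϑ`, and
`∫₀^{2π} dϑ / (A - B cos ϑ) = 2π / √(A² - B²)` then gives exactly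
`√(ww') / (π √(((w-w')² + s²) ((w+w')² + s²)))`. As `2√(ww') ≤ w + w'`, this is at most
`1 / (2π r)`, where `r² = (w-w')² + s²`: the sharp leading term, uniformly down to the boundary
`w = 0` (`imageTerm_le_inv`).

Keeping `e^{-lam t}` and half of the Gaussian exponent gains a factor `e^{-√(lam/2) r}`, by
the arithmetic-geometric mean inequality, at the price of a factor `2` (`imageTerm_le_exp`). Since
`r` grows linearly in `|n|` and dominates `|w - w'|`, this makes the images with `n ≠ 0` sum to a
constant, and the sum of all images decay exponentially when `|w - w'| ≥ 1`. The sums and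
integrals are handled in `[0, ∞]`, where Tonelli's theorem needs no integrability.
-/

open MeasureTheory Real

/-- The integral kernel `φ₄` of `(-∂_w² - 1/(4w²) - Δ_{𝕊¹} + λ)^{-1/2}` on the
half-cylinder `(0, ∞) × 𝕊¹`, obtained by the subordination formula from the
explicit heat kernels of `∂_w² + 1/(4w²)` on the half-line and of `Δ_{𝕊¹}` on
the circle. -/
noncomputable def phiFour (lam w w' θ θ' : ℝ) : ℝ :=
  (1 / Real.Gamma (1 / 2)) *
    ∫ t in Set.Ioi (0 : ℝ),
      t ^ (-(1 : ℝ) / 2) * Real.exp (-lam * t) *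
        (Real.sqrt (w * w') / (4 * π * t) *
          ∫ ϑ in Set.Ioo (0 : ℝ) (2 * π),
            Real.exp (-(w ^ 2 + w' ^ 2 - 2 * w * w' * Real.cos ϑ) / (4 * t))) *
        ((4 * π * t) ^ (-(1 : ℝ) / 2) *
          ∑' n : ℤ, Real.exp (-(θ - θ' - 2 * (n : ℝ) * π) ^ 2 / (4 * t)))

/-- `∫₀^∞ t⁻² e^{-a/t} dt = 1/a`: the integrand is the derivative of `e^{-a/t}/a`. -/
lemma lintegral_inv_sq_mul_exp (a : ℝ) (ha : 0 < a) :
    ∫⁻ t in Set.Ioi (0 : ℝ), ENNReal.ofReal (1 / t ^ 2 * rexp (-a / t)) =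
      ENNReal.ofReal (1 / a) := by
  -- The value at `0` has to be patched, since `-a / 0 = 0` would make the primitive jump there.
  let g : ℝ → ℝ := fun t => if t = 0 then 0 else rexp (-a / t) / a
  have hcont : ContinuousWithinAt g (Set.Ici 0) 0 := by
    rw [← Set.Ioi_insert, continuousWithinAt_insert_self]
    have h0 : g 0 = 0 := by simp [g]
    have h1 : Filter.Tendsto (fun t : ℝ => rexp (-a / t) / a) (nhdsWithin 0 (Set.Ioi 0))
        (nhds (0 / a)) := by
      refine Filter.Tendsto.div_const ?_ a
      refine Real.tendsto_exp_atBot.comp ?_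
      have := tendsto_inv_nhdsGT_zero (𝕜 := ℝ)
      have h2 := this.const_mul_atTop_of_neg (neg_neg_of_pos ha)
      exact h2.congr fun t => (div_eq_mul_inv _ _).symm
    rw [ContinuousWithinAt, h0]
    rw [zero_div] at h1
    refine h1.congr' ?_
    filter_upwards [self_mem_nhdsWithin] with t ht
    simp [g, ne_of_gt (Set.mem_Ioi.1 ht)]
  have hderiv : ∀ x ∈ Set.Ioi (0 : ℝ), HasDerivAt g (1 / x ^ 2 * rexp (-a / x)) x := by
    intro x hx
    have hx0 : x ≠ 0 := ne_of_gt hx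
    have h1 : HasDerivAt (fun t : ℝ => rexp (-a / t) / a) (1 / x ^ 2 * rexp (-a / x)) x := by
      have h := (((hasDerivAt_inv hx0).const_mul (-a)).exp).div_const a
      simp only [← div_eq_mul_inv] at h
      refine h.congr_deriv ?_
      field_simp
    refine h1.congr_of_eventuallyEq ?_
    filter_upwards [eventually_ne_nhds hx0] with t ht
    simp [g, ht]
  have hpos : ∀ x ∈ Set.Ioi (0 : ℝ), 0 ≤ 1 / x ^ 2 * rexp (-a / x) := fun x _ => by positivity
  have hlim : Filter.Tendsto g Filter.atTop (nhds (1 / a)) := by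
    have h1 : Filter.Tendsto (fun t : ℝ => rexp (-a / t) / a) Filter.atTop (nhds (rexp 0 / a)) := by
      refine Filter.Tendsto.div_const ?_ a
      refine (Real.continuous_exp.tendsto 0).comp ?_
      exact tendsto_const_nhds.div_atTop Filter.tendsto_id
    rw [Real.exp_zero] at h1
    refine h1.congr' ?_
    filter_upwards [Filter.eventually_ne_atTop 0] with t ht
    simp [g, ht]
  rw [← ofReal_integral_eq_lintegral_ofReal
    (integrableOn_Ioi_deriv_of_nonneg hcont hderiv hpos hlim),
    integral_Ioi_of_hasDerivAt_of_nonneg hcont hderiv hpos hlim]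
  · simp [g]
  · filter_upwards [ae_restrict_mem measurableSet_Ioi] with t ht using hpos t ht

/-- `∫₀^{2π} dϑ / (A - B cos ϑ) = 2π / √(A² - B²)`. The primitive is written so that it is smooth on
the whole line, unlike the one obtained from the substitution `tan (ϑ/2)`. -/
lemma lintegral_inv_sub_cos (A B : ℝ) (hB : 0 < B) (hAB : B < A) :
    ∫⁻ ϑ in Set.Ioo (0 : ℝ) (2 * π), ENNReal.ofReal (1 / (A - B * Real.cos ϑ)) =
      ENNReal.ofReal (2 * π / √(A ^ 2 - B ^ 2)) := by
  set S := √(A ^ 2 - B ^ 2) with hS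
  have hS2 : S ^ 2 = A ^ 2 - B ^ 2 := Real.sq_sqrt (by nlinarith)
  have hSpos : 0 < S := Real.sqrt_pos.2 (by nlinarith)
  have hBc : ∀ x, B * Real.cos x ≤ B := fun x => by nlinarith [Real.cos_le_one x]
  have hQ : ∀ x, 0 < A - B * Real.cos x := fun x => by linarith [hBc x]
  have hD : ∀ x, 0 < A + S - B * Real.cos x := fun x => by linarith [hQ x]
  let F : ℝ → ℝ := fun x =>
    (x + 2 * Real.arctan (B * Real.sin x / (A + S - B * Real.cos x))) / S
  have hF : ∀ x, HasDerivAt F (1 / (A - B * Real.cos x)) x := by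
    intro x
    have h := (((hasDerivAt_id x).add ((((Real.hasDerivAt_sin x).const_mul B).div
      (((Real.hasDerivAt_cos x).const_mul B).const_sub (A + S)) (hD x).ne').arctan.const_mul
        2)).div_const S)
    refine h.congr_deriv ?_
    have hq := (hQ x).ne'
    have hd := (hD x).ne'
    have hsum : (A + S - B * Real.cos x) ^ 2 + (B * Real.sin x) ^ 2 =
        2 * (A + S) * (A - B * Real.cos x) := by
      linear_combination hS2 + B ^ 2 * Real.sin_sq_add_cos_sq x
    have hne : (A + S - B * Real.cos x) ^ 2 + (B * Real.sin x) ^ 2 ≠ 0 := by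
      have := hD x
      positivity
    have hAS : A + S ≠ 0 := by linarith
    have h1 : 1 + (B * Real.sin x / (A + S - B * Real.cos x)) ^ 2 =
        2 * (A + S) * (A - B * Real.cos x) / (A + S - B * Real.cos x) ^ 2 := by
      rw [← hsum]; field_simp
    simp only [Pi.div_apply]
    rw [h1]
    field_simp
    linear_combination (-1) * hS2 - B ^ 2 * Real.sin_sq_add_cos_sq x
  have hc : Continuous fun x => 1 / (A - B * Real.cos x) :=
    continuous_const.div (by fun_prop) fun x => (hQ x).ne'
  have hI := intervalIntegral.integral_eq_sub_of_hasDerivAt (a := 0) (b := 2 * π)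
    (fun x _ => hF x) (hc.intervalIntegrable _ _)
  rw [intervalIntegral.integral_of_le (by positivity), integral_Ioc_eq_integral_Ioo] at hI
  rw [← ofReal_integral_eq_lintegral_ofReal, hI]
  · simp [F]
  · exact (hc.integrableOn_Icc (a := 0) (b := 2 * π)).mono_set Set.Ioo_subset_Icc_self
  · exact Filter.Eventually.of_forall fun x => (one_div_pos.2 (hQ x)).le

/-- The contribution to `φ₄` of one image point, at angular distance `s`, as a function of `t`
and `ϑ`, all numerical constants being collected in `1 / (8π²)`. -/
noncomputable def imageKernel (lam w w' s t ϑ : ℝ) : ℝ :=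
  √(w * w') / (8 * π ^ 2) * (1 / t ^ 2 *
    rexp (-lam * t - (w ^ 2 + w' ^ 2 + s ^ 2 - 2 * w * w' * Real.cos ϑ) / (4 * t)))

/-- The contribution to `φ₄` of one image point, at angular distance `s`. -/
noncomputable def imageTerm (lam w w' s : ℝ) : ENNReal :=
  ∫⁻ t in Set.Ioi (0 : ℝ), ∫⁻ ϑ in Set.Ioo (0 : ℝ) (2 * π),
    ENNReal.ofReal (imageKernel lam w w' s t ϑ)

lemma measurable_imageKernel (lam w w' s : ℝ) :
    Measurable fun p : ℝ × ℝ => imageKernel lam w w' s p.1 p.2 := by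
  unfold imageKernel
  fun_prop

/-- Any Gaussian majorant of the exponential, uniform in `t` and in the squared distance `Q ≥ r²`,
bounds an image term. The sharp constant comes from exchanging the two integrals and evaluating
both exactly, followed by `2 √(w w') ≤ w + w' ≤ √((w + w')² + s²)`. -/
lemma imageTerm_le_of_exp_le (lam w w' s E m : ℝ) (hw : 0 < w) (hw' : 0 < w') (hm : 0 < m)
    (hr : 0 < (w - w') ^ 2 + s ^ 2) (hE : 0 ≤ E)
    (hb : ∀ t > 0, ∀ Q ≥ (w - w') ^ 2 + s ^ 2,
      rexp (-lam * t - Q / (4 * t)) ≤ E * rexp (-(Q / (4 * m)) / t)) :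
    imageTerm lam w w' s ≤ ENNReal.ofReal (E * m / (2 * π * √((w - w') ^ 2 + s ^ 2))) := by
  set A := w ^ 2 + w' ^ 2 + s ^ 2 with hA
  set B := 2 * w * w' with hB
  have hBpos : 0 < B := by positivity
  have hAB : A - B = (w - w') ^ 2 + s ^ 2 := by rw [hA, hB]; ring
  have hQ : ∀ ϑ, (w - w') ^ 2 + s ^ 2 ≤ A - B * Real.cos ϑ := fun ϑ => by
    nlinarith [Real.cos_le_one ϑ]
  unfold imageTerm
  rw [lintegral_lintegral_swap
    (measurable_imageKernel lam w w' s).ennreal_ofReal.aemeasurable]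
  have hin : ∀ ϑ, ∫⁻ t in Set.Ioi (0 : ℝ), ENNReal.ofReal (imageKernel lam w w' s t ϑ) ≤
      ENNReal.ofReal (√(w * w') / (8 * π ^ 2) * E * (4 * m)) *
        ENNReal.ofReal (1 / (A - B * Real.cos ϑ)) := by
    intro ϑ
    have hQpos : 0 < A - B * Real.cos ϑ := hr.trans_le (hQ ϑ)
    have h := lintegral_inv_sq_mul_exp ((A - B * Real.cos ϑ) / (4 * m)) (by positivity)
    calc _ ≤ ∫⁻ t in Set.Ioi (0 : ℝ), ENNReal.ofReal (√(w * w') / (8 * π ^ 2) * E) *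
          ENNReal.ofReal (1 / t ^ 2 * rexp (-((A - B * Real.cos ϑ) / (4 * m)) / t)) := by
          refine setLIntegral_mono (by fun_prop) fun t ht => ?_
          rw [← ENNReal.ofReal_mul (by positivity)]
          refine ENNReal.ofReal_le_ofReal ?_
          unfold imageKernel
          have := hb t ht _ (hQ ϑ)
          calc _ ≤ √(w * w') / (8 * π ^ 2) * (1 / t ^ 2 *
                (E * rexp (-((A - B * Real.cos ϑ) / (4 * m)) / t))) := by gcongr
            _ = _ := by ring
      _ = _ := by
          rw [lintegral_const_mul _ (by fun_prop), h, ← ENNReal.ofReal_mul (by positivity),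
            ← ENNReal.ofReal_mul (by positivity)]
          congr 1
          field_simp
  refine (lintegral_mono hin).trans ?_
  rw [lintegral_const_mul _ (by fun_prop), lintegral_inv_sub_cos A B hBpos (by linarith),
    ← ENNReal.ofReal_mul (by positivity)]
  refine ENNReal.ofReal_le_ofReal ?_
  have hfac : A ^ 2 - B ^ 2 = ((w - w') ^ 2 + s ^ 2) * ((w + w') ^ 2 + s ^ 2) := by
    rw [hA, hB]; ring
  rw [hfac, Real.sqrt_mul hr.le]
  set r := √((w - w') ^ 2 + s ^ 2)
  have hrpos : 0 < r := Real.sqrt_pos.2 hr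
  have hR : 2 * √(w * w') ≤ √((w + w') ^ 2 + s ^ 2) := by
    refine Real.le_sqrt_of_sq_le ?_
    rw [mul_pow, Real.sq_sqrt (by positivity)]
    nlinarith [sq_nonneg (w - w'), sq_nonneg s]
  set R := √((w + w') ^ 2 + s ^ 2)
  have hRpos : 0 < R := Real.sqrt_pos.2 (by positivity)
  calc _ = (2 * √(w * w') / R) * (E * m / (2 * π * r)) := by field_simp; ring
    _ ≤ 1 * (E * m / (2 * π * r)) := by
        gcongr
        exact (div_le_one hRpos).2 hR
    _ = _ := one_mul _

lemma imageTerm_le_inv (lam w w' s : ℝ) (hlam : 0 < lam) (hw : 0 < w) (hw' : 0 < w')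
    (hr : 0 < (w - w') ^ 2 + s ^ 2) :
    imageTerm lam w w' s ≤ ENNReal.ofReal (1 / (2 * π) * (√((w - w') ^ 2 + s ^ 2))⁻¹) := by
  convert imageTerm_le_of_exp_le lam w w' s 1 1 hw hw' one_pos hr zero_le_one ?_ using 2
  · field_simp
  · intro t ht Q _
    rw [one_mul]
    apply Real.exp_le_exp.2
    have : -(Q / (4 * 1)) / t = - (Q / (4 * t)) := by field_simp
    rw [this]
    nlinarith [mul_pos hlam ht]

/-- At distance `r ≥ 1` the mass `lam` gives exponential decay, by
`lam t + r²/(8t) ≥ √(lam/2) r`; half of the Gaussian is kept for the `t`-integral. -/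
lemma imageTerm_le_exp (lam w w' s : ℝ) (hlam : 0 < lam) (hw : 0 < w) (hw' : 0 < w')
    (hr : 1 ≤ √((w - w') ^ 2 + s ^ 2)) :
    imageTerm lam w w' s ≤
      ENNReal.ofReal (rexp (-√(lam / 2) * √((w - w') ^ 2 + s ^ 2))) := by
  have hr0 : 0 < (w - w') ^ 2 + s ^ 2 := Real.sqrt_pos.1 (one_pos.trans_le hr)
  have hrsq : (√((w - w') ^ 2 + s ^ 2)) ^ 2 = (w - w') ^ 2 + s ^ 2 := Real.sq_sqrt hr0.le
  set c := √(lam / 2)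
  have hcsq : c ^ 2 = lam / 2 := Real.sq_sqrt (by positivity)
  refine (imageTerm_le_of_exp_le lam w w' s
    (rexp (-c * √((w - w') ^ 2 + s ^ 2))) 2 hw hw' two_pos hr0
    (Real.exp_pos _).le ?_).trans (ENNReal.ofReal_le_ofReal ?_)
  · intro t ht Q hQ
    rw [← hrsq] at hQ
    set r := √((w - w') ^ 2 + s ^ 2)
    rw [← Real.exp_add]
    apply Real.exp_le_exp.2
    have h1 : c * r ≤ lam * t + Q / (8 * t) := by
      have h2 : lam * t + Q / (8 * t) - c * r =
          ((4 * c * t - r) ^ 2 + (Q - r ^ 2)) / (8 * t) := by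
        field_simp
        linear_combination (-16) * t ^ 2 * hcsq
      have h3 : 0 ≤ ((4 * c * t - r) ^ 2 + (Q - r ^ 2)) / (8 * t) := by
        have : 0 ≤ Q - r ^ 2 := by linarith
        positivity
      linarith
    have h4 : -(Q / (4 * 2)) / t = -(Q / (8 * t)) := by field_simp; ring
    have h5 : Q / (4 * t) = 2 * (Q / (8 * t)) := by field_simp; ring
    rw [h4, h5]
    linarith
  · set r := √((w - w') ^ 2 + s ^ 2)
    rw [div_le_iff₀ (by positivity)]
    have : 2 ≤ 2 * π * r := by nlinarith [Real.pi_gt_three]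
    exact mul_le_mul_of_nonneg_left this (Real.exp_pos _).le

lemma enorm_tsum_le (f : ℤ → ℝ) (hf : ∀ n, 0 ≤ f n) :
    ‖∑' n, f n‖ₑ ≤ ∑' n, ENNReal.ofReal (f n) := by
  by_cases h : Summable f
  · rw [← ENNReal.ofReal_tsum_of_nonneg hf h, Real.enorm_of_nonneg (tsum_nonneg hf)]
  · simp [tsum_eq_zero_of_not_summable h]

/-- `φ₄` is dominated by the sum of its image terms. Only this inequality is needed, and it holds
without any convergence assumption, since a divergent Bochner integral or sum is `0`. -/
lemma phiFour_le_tsum (lam w w' θ θ' : ℝ) :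
    ENNReal.ofReal (phiFour lam w w' θ θ') ≤
      ∑' n : ℤ, imageTerm lam w w' (θ - θ' - 2 * (n : ℝ) * π) := by
  unfold phiFour
  rw [← integral_const_mul]
  refine (Real.ofReal_le_enorm _).trans ((enorm_integral_le_lintegral_enorm _).trans ?_)
  unfold imageTerm
  rw [← lintegral_tsum fun n =>
    ((measurable_imageKernel lam w w' _).ennreal_ofReal.lintegral_prod_right').aemeasurable]
  refine setLIntegral_mono' measurableSet_Ioi fun t ht => ?_
  have ht : 0 < t := ht
  set P := √(w * w') / (8 * π ^ 2) * (1 / t ^ 2 * rexp (-lam * t)) with hP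
  have hP0 : 0 ≤ P := by positivity
  set I := ∫ ϑ in Set.Ioo (0 : ℝ) (2 * π),
    rexp (-(w ^ 2 + w' ^ 2 - 2 * w * w' * Real.cos ϑ) / (4 * t)) with hI
  set T := ∑' n : ℤ, rexp (-(θ - θ' - 2 * (n : ℝ) * π) ^ 2 / (4 * t)) with hT
  have hconst : 1 / Real.Gamma (1 / 2) * (t ^ (-(1 : ℝ) / 2) * rexp (-lam * t) *
      (√(w * w') / (4 * π * t) * I) * ((4 * π * t) ^ (-(1 : ℝ) / 2) * T)) = P * I * T := by
    have h1 : ∀ x : ℝ, 0 ≤ x → x ^ (-(1 : ℝ) / 2) = (√x)⁻¹ := fun x hx => by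
      rw [neg_div, Real.rpow_neg hx, Real.sqrt_eq_rpow]
    have h2 : √(4 * π * t) = 2 * √π * √t := by
      rw [Real.sqrt_mul (by positivity), Real.sqrt_mul (by positivity),
        show √(4 : ℝ) = 2 by rw [show (4 : ℝ) = 2 ^ 2 by norm_num]; simp]
    rw [Real.Gamma_one_half_eq, h1 t ht.le, h1 (4 * π * t) (by positivity), h2, hP]
    have e1 : √π ^ 2 = π := Real.sq_sqrt Real.pi_pos.le
    have e2 : √t ^ 2 = t := Real.sq_sqrt ht.le
    field_simp
    rw [e1, e2]
    ring
  rw [hconst, enorm_mul, enorm_mul, Real.enorm_of_nonneg hP0]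
  have hIle : ‖I‖ₑ ≤ ∫⁻ ϑ in Set.Ioo (0 : ℝ) (2 * π),
      ENNReal.ofReal (rexp (-(w ^ 2 + w' ^ 2 - 2 * w * w' * Real.cos ϑ) / (4 * t))) := by
    refine (enorm_integral_le_lintegral_enorm _).trans_eq ?_
    simp_rw [Real.enorm_of_nonneg (Real.exp_pos _).le]
  have hTle := enorm_tsum_le (fun n : ℤ => rexp (-(θ - θ' - 2 * (n : ℝ) * π) ^ 2 / (4 * t)))
    fun n => (Real.exp_pos _).le
  refine (mul_le_mul' (mul_le_mul' le_rfl hIle) hTle).trans_eq ?_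
  rw [← ENNReal.tsum_mul_left]
  congr 1 with n
  rw [← lintegral_const_mul _ (by fun_prop), ← lintegral_mul_const _ (by fun_prop)]
  congr 1 with ϑ
  rw [← ENNReal.ofReal_mul hP0, ← ENNReal.ofReal_mul (by positivity)]
  congr 1
  unfold imageKernel
  rw [hP, sub_eq_add_neg (-lam * t), Real.exp_add,
    show -((w ^ 2 + w' ^ 2 + (θ - θ' - 2 * (n : ℝ) * π) ^ 2 - 2 * w * w' * Real.cos ϑ) / (4 * t)) =
      -(w ^ 2 + w' ^ 2 - 2 * w * w' * Real.cos ϑ) / (4 * t) +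
        -(θ - θ' - 2 * (n : ℝ) * π) ^ 2 / (4 * t) by ring, Real.exp_add]
  ring

lemma summable_exp_neg_mul_abs_int (c : ℝ) (hc : 0 < c) :
    Summable fun n : ℤ => rexp (-c * (2 * π * |(n : ℝ)| - π) / 2) := by
  have h : Summable fun n : ℕ => rexp (c * π / 2) * rexp ((n : ℝ) * (-(c * π))) :=
    (Real.summable_exp_nat_mul_iff.2 (by have := mul_pos hc Real.pi_pos; linarith)).mul_left _
  have h2 : ∀ n : ℕ, rexp (c * π / 2) * rexp ((n : ℝ) * (-(c * π))) =
      rexp (-c * (2 * π * (n : ℝ) - π) / 2) := fun n => by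
    rw [← Real.exp_add]; congr 1; ring
  simp_rw [h2] at h
  refine Summable.of_nat_of_neg ?_ ?_ <;> simpa using h

/-- The image points at angular separation `|x| ≤ π` recede linearly. -/
lemma image_dist_ge (x : ℝ) (hx : |x| ≤ π) (n : ℤ) :
    2 * π * |(n : ℝ)| - π ≤ |x - 2 * (n : ℝ) * π| := by
  have h := abs_sub_abs_le_abs_sub (2 * (n : ℝ) * π) x
  rw [abs_sub_comm, abs_mul, abs_mul, abs_of_pos Real.pi_pos, abs_two] at h
  linarith

/-- Asymptotic estimates for the kernel `φ₄` of
`(-∂_w² - 1/(4w²) - Δ_{𝕊¹} + λ)^{-1/2}`: for `λ > 0` there exist `C > 0` and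
`δ₅ > 0` such that, for `w, w' > 0` and `|θ - θ'| ≤ π`,
(i) `φ₄ ≤ (1/2π)((w-w')² + (θ-θ')²)^{-1/2} + C` when `|w-w'| ≤ 1` and
`(w, θ) ≠ (w', θ')`; and
(ii) `φ₄ ≤ C e^{-δ₅|w-w'|}` when `|w-w'| ≥ 1`. -/
theorem phiFour_estimates (lam : ℝ) (hlam : 0 < lam) :
    ∃ C > 0, ∃ δ₅ > 0, ∀ w w' θ θ' : ℝ, 0 < w → 0 < w' → |θ - θ'| ≤ π →
      ((|w - w'| ≤ 1 → (w, θ) ≠ (w', θ') →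
        phiFour lam w w' θ θ' ≤
          (1 / (2 * π)) * (Real.sqrt ((w - w') ^ 2 + (θ - θ') ^ 2))⁻¹ + C) ∧
      (1 ≤ |w - w'| →
        phiFour lam w w' θ θ' ≤ C * Real.exp (-δ₅ * |w - w'|))) := by
  set c := √(lam / 2) with hc
  have hcpos : 0 < c := Real.sqrt_pos.2 (by positivity)
  let b : ℤ → ℝ := fun n => rexp (-c * (2 * π * |(n : ℝ)| - π) / 2)
  have hbs : Summable b := summable_exp_neg_mul_abs_int c hcpos
  have hbpos : ∀ n, 0 < b n := fun n => Real.exp_pos _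
  have hbtsum : ∑' n, ENNReal.ofReal (b n) = ENNReal.ofReal (∑' n, b n) :=
    (ENNReal.ofReal_tsum_of_nonneg (fun n => (hbpos n).le) hbs).symm
  have hCpos : 0 < ∑' n, b n := hbs.tsum_pos (fun n => (hbpos n).le) 0 (hbpos 0)
  refine ⟨∑' n, b n, hCpos, c / 2, by positivity, fun w w' θ θ' hw hw' hθ => ?_⟩
  -- The distance to an image point dominates the mean of its two coordinates.
  have hterm : ∀ n : ℤ, 1 ≤ √((w - w') ^ 2 + (θ - θ' - 2 * (n : ℝ) * π) ^ 2) →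
      imageTerm lam w w' (θ - θ' - 2 * (n : ℝ) * π) ≤
        ENNReal.ofReal (rexp (-(c / 2) * |w - w'|) * b n) := by
    intro n hn
    refine (imageTerm_le_exp lam w w' _ hlam hw hw' hn).trans (ENNReal.ofReal_le_ofReal ?_)
    simp only [b]
    rw [← Real.exp_add]
    apply Real.exp_le_exp.2
    have h1 := image_dist_ge (θ - θ') hθ n
    have h2 := Real.abs_le_sqrt (x := w - w')
      (y := (w - w') ^ 2 + (θ - θ' - 2 * (n : ℝ) * π) ^ 2) (by nlinarith)
    have h3 := Real.abs_le_sqrt (x := θ - θ' - 2 * (n : ℝ) * π)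
      (y := (w - w') ^ 2 + (θ - θ' - 2 * (n : ℝ) * π) ^ 2) (by nlinarith)
    rw [← hc]
    nlinarith
  have hmain := phiFour_le_tsum lam w w' θ θ'
  constructor
  · intro _ hne
    have hr : 0 < (w - w') ^ 2 + (θ - θ') ^ 2 := by
      by_contra! h
      apply hne
      have h1 : (w - w') ^ 2 = 0 := by nlinarith [sq_nonneg (w - w'), sq_nonneg (θ - θ')]
      have h2 : (θ - θ') ^ 2 = 0 := by nlinarith [sq_nonneg (w - w'), sq_nonneg (θ - θ')]
      have h1' := sub_eq_zero.1 (pow_eq_zero_iff two_ne_zero |>.1 h1)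
      have h2' := sub_eq_zero.1 (pow_eq_zero_iff two_ne_zero |>.1 h2)
      rw [h1', h2']
    set M := 1 / (2 * π) * (√((w - w') ^ 2 + (θ - θ') ^ 2))⁻¹ with hM
    have hM0 : 0 ≤ M := by positivity
    have hle : ∀ n : ℤ, imageTerm lam w w' (θ - θ' - 2 * (n : ℝ) * π) ≤
        (if n = 0 then ENNReal.ofReal M else 0) + ENNReal.ofReal (b n) := by
      intro n
      by_cases hn : n = 0
      · subst hn
        simp only [Int.cast_zero, mul_zero, zero_mul, sub_zero, if_true]
        exact (imageTerm_le_inv lam w w' _ hlam hw hw' hr).trans le_self_add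
      · rw [if_neg hn, zero_add]
        have h1 : (1 : ℝ) ≤ |(n : ℝ)| := by exact_mod_cast Int.one_le_abs hn
        have h2 := image_dist_ge (θ - θ') hθ n
        have h3 := Real.abs_le_sqrt (x := θ - θ' - 2 * (n : ℝ) * π)
          (y := (w - w') ^ 2 + (θ - θ' - 2 * (n : ℝ) * π) ^ 2) (by nlinarith)
        refine (hterm n (by nlinarith [Real.pi_gt_three])).trans (ENNReal.ofReal_le_ofReal ?_)
        refine mul_le_of_le_one_left (hbpos n).le (Real.exp_le_one_iff.2 ?_)
        have := mul_nonneg hcpos.le (abs_nonneg (w - w'))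
        linarith
    have h := hmain.trans (ENNReal.tsum_le_tsum hle)
    rw [ENNReal.tsum_add, tsum_ite_eq, hbtsum, ← ENNReal.ofReal_add hM0 hCpos.le] at h
    exact (ENNReal.ofReal_le_ofReal_iff (by positivity)).1 h
  · intro h1
    have h := hmain.trans (ENNReal.tsum_le_tsum fun n => hterm n <| h1.trans <|
      Real.abs_le_sqrt (by nlinarith [sq_nonneg (θ - θ' - 2 * (n : ℝ) * π)]))
    simp_rw [ENNReal.ofReal_mul (Real.exp_pos _).le] at h
    rw [ENNReal.tsum_mul_left, hbtsum, ← ENNReal.ofReal_mul (Real.exp_pos _).le] at h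
    rw [mul_comm]
    exact (ENNReal.ofReal_le_ofReal_iff (by positivity)).1 h
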